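/- Let ε > 0, let p be a probability distribution on Fin N, and let C ⊆ Fin N satisfy ∑_{i ∈ C} p i ≤ ε/32. Let i_1, …, i_M be M independent samples from p and let A ⊆ Fin N be the set of elements appearing at least once among the samples. Then Prob[ |A ∩ C| ≥ (ε/16)·M ] ≤ exp(−M·ε²/2⁹). -/

import Mathlib

open scoped Classical

open MeasureTheory ProbabilityTheory in
/-- Hoeffding's lemma for a Bernoulli variable. -/
lemma bernoulli_hoeffding (q l : ℝ) (h0 : 0 ≤ q) (h1 : q ≤ 1) :
    1 - q + q * Real.exp l ≤ Real.exp (l * q + l ^ 2 / 8) := by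
  let μ : Measure ℝ := ENNReal.ofReal q • Measure.dirac 1 + ENNReal.ofReal (1 - q) • Measure.dirac 0
  have hμ : IsProbabilityMeasure μ := by
    constructor
    simp only [μ, Measure.add_apply, Measure.smul_apply, measure_univ, smul_eq_mul, mul_one]
    rw [← ENNReal.ofReal_add h0 (by linarith)]
    simp
  have hint : ∀ f : ℝ → ℝ, ∫ x, f x ∂μ = q * f 1 + (1 - q) * f 0 := by
    intro f
    have i1 : Integrable f (ENNReal.ofReal q • Measure.dirac (1 : ℝ)) :=
      (integrable_dirac (by simp)).smul_measure (by simp)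
    have i2 : Integrable f (ENNReal.ofReal (1 - q) • Measure.dirac (0 : ℝ)) :=
      (integrable_dirac (by simp)).smul_measure (by simp)
    rw [integral_add_measure i1 i2, integral_smul_measure, integral_smul_measure,
      integral_dirac, integral_dirac, ENNReal.toReal_ofReal h0,
      ENNReal.toReal_ofReal (by linarith)]
    simp
  have hae : ∀ᵐ x ∂μ, (fun x : ℝ => x) x ∈ Set.Icc (0 : ℝ) 1 := by
    have hm : MeasurableSet {x : ℝ | x ∈ Set.Icc (0 : ℝ) 1} := measurableSet_Icc
    rw [ae_add_measure_iff]
    exact ⟨Measure.ae_smul_measure ((ae_dirac_iff hm).2 (by simp)) _,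
      Measure.ae_smul_measure ((ae_dirac_iff hm).2 (by simp)) _⟩
  have h := (hasSubgaussianMGF_of_mem_Icc (μ := μ) (X := fun x => x) (by fun_prop) hae).mgf_le l
  unfold mgf at h
  simp only [hint] at h
  have e : l * q + l ^ 2 / 8 =
      l * q + ((((‖(1 : ℝ) - 0‖₊ / 2) ^ 2 : NNReal) : ℝ) * l ^ 2 / 2) := by
    simp; ring
  rw [e, Real.exp_add]
  refine le_trans (le_of_eq ?_) (mul_le_mul_of_nonneg_left h (Real.exp_nonneg _))
  rw [mul_add, mul_left_comm, mul_left_comm (Real.exp (l * q)), ← Real.exp_add, ← Real.exp_add]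
  ring_nf
  simp
  ring

/-- Chernoff-type bound: if `C` has `p`-probability at most `ε/32`, then the set
`A` of elements appearing among `M` independent samples from `p` satisfies
`|A ∩ C| ≥ (ε/16)·M` with probability at most `exp(−Mε²/2⁹)`. -/
theorem intersection_with_C_bound
    (N M : ℕ) (ε : ℝ) (hε : 0 < ε)
    (p : Fin N → ℝ) (hp : ∀ i, 0 ≤ p i) (hsum : ∑ i, p i = 1)
    (C : Finset (Fin N)) (hC : ∑ i ∈ C, p i ≤ ε / 32) :
    (∑ s ∈ Finset.univ.filter (fun s : Fin M → Fin N =>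
        ε / 16 * (M : ℝ) ≤ ((Finset.image s Finset.univ ∩ C).card : ℝ)),
      ∏ a, p (s a)) ≤ Real.exp (-(M : ℝ) * ε ^ 2 / 2 ^ 9) := by
  have hcard : ∀ s : Fin M → Fin N, (Finset.image s Finset.univ ∩ C).card ≤
      (Finset.univ.filter (fun a => s a ∈ C)).card := by
    intro s
    have : Finset.image s Finset.univ ∩ C ⊆
        Finset.image s (Finset.univ.filter (fun a => s a ∈ C)) := by
      intro x hx
      simp only [Finset.mem_inter, Finset.mem_image, Finset.mem_univ, true_and,
        Finset.mem_filter] at hx ⊢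
      obtain ⟨⟨a, rfl⟩, h⟩ := hx
      exact ⟨a, h, rfl⟩
    exact (Finset.card_le_card this).trans Finset.card_image_le
  rcases Nat.eq_zero_or_pos M with rfl | hM
  · simp
  have hM' : (0 : ℝ) < M := by exact_mod_cast hM
  by_cases hb : 16 < ε
  · rw [Finset.filter_false_of_mem]
    · simpa using Real.exp_nonneg _
    · intro s _ h
      have h1 := (hcard s).trans (Finset.card_le_univ _)
      rw [Fintype.card_fin] at h1
      have h2 : ((Finset.image s Finset.univ ∩ C).card : ℝ) ≤ M := by exact_mod_cast h1
      nlinarith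
  push Not at hb
  set q := ∑ i ∈ C, p i with hq
  have hq0 : 0 ≤ q := Finset.sum_nonneg fun i _ => hp i
  have hq1 : q ≤ 1 := by linarith
  let f : Fin N → ℝ := fun i => p i * Real.exp (if i ∈ C then ε / 8 else 0)
  have hf : ∑ i, f i = 1 - q + q * Real.exp (ε / 8) := by
    have : ∀ i, f i = p i + (if i ∈ C then p i else 0) * (Real.exp (ε / 8) - 1) := by
      intro i
      by_cases h : i ∈ C <;> simp [f, h]
      ring
    simp only [this, Finset.sum_add_distrib, ← Finset.sum_mul, hsum]
    simp only [Finset.sum_ite_mem, Finset.univ_inter, ← hq]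
    ring
  have key : ∀ s : Fin M → Fin N, ∏ a, f (s a) = (∏ a, p (s a)) *
      Real.exp (ε / 8 * (Finset.univ.filter (fun a => s a ∈ C)).card) := by
    intro s
    simp only [f, Finset.prod_mul_distrib, ← Real.exp_sum]
    congr 2
    rw [← Finset.sum_filter]
    simp [mul_comm]
  have step : (∑ s ∈ Finset.univ.filter (fun s : Fin M → Fin N =>
        ε / 16 * (M : ℝ) ≤ ((Finset.image s Finset.univ ∩ C).card : ℝ)),
      ∏ a, p (s a)) ≤ ∑ s : Fin M → Fin N,
        Real.exp (-(ε / 8 * (ε / 16 * M))) * ∏ a, f (s a) := by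
    refine (Finset.sum_le_sum fun s hs => ?_).trans
      (Finset.sum_le_sum_of_subset_of_nonneg (Finset.filter_subset _ _) fun s _ _ => ?_)
    · rw [key, mul_left_comm, ← Real.exp_add]
      refine le_mul_of_one_le_right (Finset.prod_nonneg fun a _ => hp _) (Real.one_le_exp ?_)
      have h1 := (Finset.mem_filter.1 hs).2
      have h2 : ((Finset.image s Finset.univ ∩ C).card : ℝ) ≤
        (Finset.univ.filter (fun a => s a ∈ C)).card := by exact_mod_cast hcard s
      nlinarith
    · exact mul_nonneg (Real.exp_nonneg _)
        (Finset.prod_nonneg fun a _ => mul_nonneg (hp _) (Real.exp_nonneg _))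
  refine step.trans ?_
  rw [← Finset.mul_sum, ← Fintype.sum_pow, hf]
  have hB := bernoulli_hoeffding q (ε / 8) hq0 hq1
  have hnn : 0 ≤ 1 - q + q * Real.exp (ε / 8) :=
    add_nonneg (by linarith) (mul_nonneg hq0 (Real.exp_nonneg _))
  refine (mul_le_mul_of_nonneg_left (pow_le_pow_left₀ hnn hB M) (Real.exp_nonneg _)).trans ?_
  rw [← Real.exp_nat_mul, ← Real.exp_add]
  apply Real.exp_le_exp.2
  have : (M : ℝ) * ε * q ≤ M * ε * (ε / 32) := mul_le_mul_of_nonneg_left hC (by positivity)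
  nlinarith
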